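/- arXiv:2505.23614 — 2 statements merged into one kernel-verified Lean document; each statement's English description precedes it below -/
import Mathlib

section
/- Let V be a real vector space, let α_t, α_{t−1}, σ_t, σ_{t−1} > 0 satisfy σ_t/α_t > σ_{t−1}/α_{t−1}, and define λ_t = log(α_t/σ_t), λ_{t−1} = log(α_{t−1}/σ_{t−1}). For any x, s, ε ∈ V, let x′ = (α_{t−1}/α_t)·x + σ_t²·(α_{t−1}/α_t − σ_{t−1}/σ_t)·s be the DDIM denoising step applied to x, and let x″ = (α_t/α_{t−1})·x′ + α_t·√(σ_t²/α_t² − σ_{t−1}²/α_{t−1}²)·ε be the result of re-noising x′ back to level t via the forward kernel. Then x″ = x + σ_t²·(1 − e^{λ_t − λ_{t−1}})·s + σ_t·√(1 − e^{2(λ_t − λ_{t−1})})·ε. -/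
/-- A DDIM denoising step followed by re-noising through the forward kernel is the
recurrence `x ↦ x + σ_t²(1 − e^{λ_t − λ_{t−1}}) s + σ_t √(1 − e^{2(λ_t − λ_{t−1})}) ε`,
where `λ_t = log(α_t/σ_t)` is the log-SNR. -/
theorem stmt_3
    {V : Type*} [AddCommGroup V] [Module ℝ V]
    (αt αt₁ σt σt₁ : ℝ) (hαt : 0 < αt) (hαt₁ : 0 < αt₁) (hσt : 0 < σt) (hσt₁ : 0 < σt₁)
    (hSNR : σt₁ / αt₁ < σt / αt)
    (lamt lamt₁ : ℝ) (hlamt : lamt = Real.log (αt / σt)) (hlamt₁ : lamt₁ = Real.log (αt₁ / σt₁))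
    (x s ε x' x'' : V)
    (hx' : x' = (αt₁ / αt) • x + (σt ^ 2 * (αt₁ / αt - σt₁ / σt)) • s)
    (hx'' : x'' = (αt / αt₁) • x'
        + (αt * Real.sqrt (σt ^ 2 / αt ^ 2 - σt₁ ^ 2 / αt₁ ^ 2)) • ε) :
    x'' = x + (σt ^ 2 * (1 - Real.exp (lamt - lamt₁))) • s
        + (σt * Real.sqrt (1 - Real.exp (2 * (lamt - lamt₁)))) • ε := by
  have he : Real.exp (lamt - lamt₁) = (αt / σt) / (αt₁ / σt₁) := by
    rw [hlamt, hlamt₁, Real.exp_sub, Real.exp_log (by positivity), Real.exp_log (by positivity)]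
  have he2 : Real.exp (2 * (lamt - lamt₁)) = ((αt / σt) / (αt₁ / σt₁)) ^ 2 := by
    rw [← he, two_mul, Real.exp_add, sq]
  have h1 : αt / αt₁ * (αt₁ / αt) = 1 := by field_simp
  have h2 : αt / αt₁ * (σt ^ 2 * (αt₁ / αt - σt₁ / σt))
      = σt ^ 2 * (1 - Real.exp (lamt - lamt₁)) := by
    rw [he]; field_simp
  have h3 : αt * Real.sqrt (σt ^ 2 / αt ^ 2 - σt₁ ^ 2 / αt₁ ^ 2)
      = σt * Real.sqrt (1 - Real.exp (2 * (lamt - lamt₁))) := by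
    have h4 : σt ^ 2 / αt ^ 2 - σt₁ ^ 2 / αt₁ ^ 2
        = (σt / αt) ^ 2 * (1 - Real.exp (2 * (lamt - lamt₁))) := by
      rw [he2]; field_simp
    rw [h4, Real.sqrt_mul (sq_nonneg _), Real.sqrt_sq (by positivity), ← mul_assoc,
      mul_div_cancel₀ _ hαt.ne']
  rw [hx'', hx', smul_add, smul_smul, smul_smul, h1, h2, h3, one_smul]
end

section
/- For σ > 0 and h < 0, the DDIM recurrence coefficients a(h) = σ²(1 − e^{h}) and b(h) = σ·√(1 − e^{2h}) satisfy b(h)² = (1 + e^{h})·a(h); consequently the ratio b(h)²/(2·a(h)) = (1 + e^{h})/2 tends to 1 as h → 0 from the left. That is, in the continuous limit of vanishing log-SNR increments, the recurrence step x + a·s + b·ε matches the unadjusted Langevin step x + η·s + √(2η)·ε with step size η = a. -/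
open Real Filter

/-- For `σ > 0` and `h < 0`, the DDIM recurrence coefficients `a(h) = σ²(1 − e^h)` and
`b(h) = σ √(1 − e^{2h})` satisfy `b(h)² = (1 + e^h) a(h)`; consequently the ratio
`b(h)²/(2 a(h)) = (1 + e^h)/2` tends to `1` as `h → 0⁻`, so the recurrence step matches the
unadjusted Langevin step with step size `η = a`. -/
theorem stmt_4 (σ : ℝ) (hσ : 0 < σ)
    (a b : ℝ → ℝ)
    (ha : ∀ h, a h = σ ^ 2 * (1 - Real.exp h))
    (hb : ∀ h, b h = σ * Real.sqrt (1 - Real.exp (2 * h))) :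
    (∀ h < 0, b h ^ 2 = (1 + Real.exp h) * a h) ∧
    (∀ h < 0, b h ^ 2 / (2 * a h) = (1 + Real.exp h) / 2) ∧
    Tendsto (fun h => b h ^ 2 / (2 * a h)) (nhdsWithin 0 (Set.Iio 0)) (nhds 1) := by
  have h1 : ∀ h < 0, b h ^ 2 = (1 + Real.exp h) * a h := by
    intro h hh
    have he : Real.exp (2 * h) ≤ 1 := Real.exp_le_one_iff.mpr (by linarith)
    have h2 : Real.exp (2 * h) = Real.exp h ^ 2 := by
      rw [two_mul, Real.exp_add, sq]
    rw [hb, ha, mul_pow, Real.sq_sqrt (by linarith), h2]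
    ring
  have h2 : ∀ h < 0, b h ^ 2 / (2 * a h) = (1 + Real.exp h) / 2 := by
    intro h hh
    have he : Real.exp h < 1 := Real.exp_lt_one_iff.mpr hh
    have hpos : 0 < a h := by
      rw [ha]
      exact mul_pos (pow_pos hσ 2) (by linarith)
    have hne : a h ≠ 0 := hpos.ne'
    rw [h1 h hh]
    field_simp
  refine ⟨h1, h2, ?_⟩
  have hc : Continuous (fun h : ℝ => (1 + Real.exp h) / 2) := by fun_prop
  have ht := (hc.tendsto 0).mono_left (nhdsWithin_le_nhds (s := Set.Iio 0))
  have h0 : (1 + Real.exp 0) / 2 = (1 : ℝ) := by norm_num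
  rw [h0] at ht
  refine ht.congr' ?_
  filter_upwards [self_mem_nhdsWithin] with h hh
  exact (h2 h hh).symm
end
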